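/- Let A be a structurable division algebra over a field k with char(k) ≠ 2 and char(k) ≠ 3, and let 0 ≠ x ∈ A with conjugate inverse x̂. Then q_{x̂}(q_x(s)) = s and q_x(q_{x̂}(s)) = s for all s ∈ S; in particular q_x : S → S is a bijection with inverse q_{x̂}. -/

import Mathlib

/-- The triple product `{x,y,z} := (x·ȳ)·z + (z·ȳ)·x − (z·x̄)·y` of a (not necessarily
associative or commutative) unital algebra `A` equipped with an involution `bar`. -/
def strTrip {A : Type*} [NonAssocRing A] (bar : A → A) (x y z : A) : A :=
  x * bar y * z + z * bar y * x - z * bar x * y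

/-- `ψ(x,y) := x·ȳ − y·x̄`. -/
def strPsi {A : Type*} [NonAssocRing A] (bar : A → A) (x y : A) : A :=
  x * bar y - y * bar x

/-- `q_x(s) := (1/6)·ψ(x, U_x(s·x))`, where `U_x y := {x,y,x}`. -/
noncomputable def strQ (k : Type*) [Field k] {A : Type*} [NonAssocRing A] [Module k A]
    (bar : A → A) (x s : A) : A :=
  (6 : k)⁻¹ • strPsi bar x (strTrip bar x (s * x) x)

/-- `(A, bar)` is a structurable algebra over `k`: `bar` is a `k`-linear involutive
anti-automorphism of `A`, and the operator identity
`[V_{x,y}, V_{z,w}] = V_{{x,y,z},w} − V_{z,{y,x,w}}` holds, where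
`V_{x,y} z := strTrip bar x y z`. -/
def IsStructurable (k : Type*) [Field k] (A : Type*) [NonAssocRing A] [Module k A]
    (bar : A → A) : Prop :=
  (∀ x y : A, bar (x + y) = bar x + bar y) ∧
  (∀ (c : k) (x : A), bar (c • x) = c • bar x) ∧
  (∀ x y : A, bar (x * y) = bar y * bar x) ∧
  (∀ x : A, bar (bar x) = x) ∧
  (∀ x y z w a : A,
    strTrip bar x y (strTrip bar z w a) - strTrip bar z w (strTrip bar x y a)
      = strTrip bar (strTrip bar x y z) w a - strTrip bar z (strTrip bar y x w) a)

/-- `A` is a (conjugate) division algebra: every nonzero `u ∈ A` has a conjugate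
inverse `v`, i.e. `V_{u,v} = id`. -/
def IsConjDivision {A : Type*} [NonAssocRing A] (bar : A → A) : Prop :=
  ∀ u : A, u ≠ 0 → ∃ v : A, ∀ z : A, strTrip bar u v z = z

/-!
The pair `(V_{x,y}, -V_{y,x})` acts by derivations on the triple product, hence also on the
operators `z ↦ {a,z,b} - {b,z,a} = ψ(a,b)·z`. For skew `s = ½ψ(s,1)` this gives
`V_{x,y} L_s + L_s V_{y,x} = L_t` with `t = {x,y,s} + s·{y,x,1}` skew. The case `y = 1` yields the
skew-alternativity of `A`: the associator changes sign whenever a skew argument is swapped with a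
neighbour. Skew-alternativity in turn identifies `t` with `ψ(s·y,x)`.

If `y` is the conjugate inverse of `x`, then so is `x` of `y`, and the formula for `t` becomes
`ψ(s·x,y) = 2s`. It follows that `{s·x,x,y} = 3(s·x)`, that `q_x(s)·y = -⅓U_x(s·x)`, and that
`U_y U_x(s·x) = 9(s·x)`. Hence
`q_y(q_x(s)) = ⅙ψ(y, U_y(q_x(s)·y)) = -½ψ(y, s·x) = ½ψ(s·x, y) = s`.
-/

/-- `v` is a conjugate inverse of `u`, i.e. `V_{u,v} = id`. -/
def IsConjInverse {A : Type*} [NonAssocRing A] (bar : A → A) (u v : A) : Prop :=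
  ∀ z : A, strTrip bar u v z = z

/-- The quadratic operator `U_x y = {x,y,x}`. -/
def strU {A : Type*} [NonAssocRing A] (bar : A → A) (x y : A) : A :=
  strTrip bar x y x

section TripleProduct

variable {A : Type*} [NonAssocRing A] (bar : A → A)

theorem neg_strPsi (a b : A) : -strPsi bar a b = strPsi bar b a :=
  neg_sub _ _

theorem strPsi_mul (a b z : A) :
    strPsi bar a b * z = strTrip bar a z b - strTrip bar b z a := by
  simp only [strTrip, strPsi, sub_mul]
  abel

theorem strQ_eq (k : Type*) [Field k] [Module k A] (x s : A) :
    strQ k bar x s = (6 : k)⁻¹ • strPsi bar x (strU bar x (s * x)) :=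
  rfl

theorem strTrip_sub_right (x y z w : A) :
    strTrip bar x y (z - w) = strTrip bar x y z - strTrip bar x y w := by
  simp only [strTrip, mul_sub, sub_mul]
  abel

end TripleProduct

namespace IsStructurable

variable {k : Type*} [Field k] {A : Type*} [NonAssocRing A] [Module k A] {bar : A → A}

theorem bar_add (hA : IsStructurable k A bar) (x y : A) : bar (x + y) = bar x + bar y :=
  hA.1 x y

theorem bar_smul (hA : IsStructurable k A bar) (c : k) (x : A) : bar (c • x) = c • bar x :=
  hA.2.1 c x

theorem bar_mul (hA : IsStructurable k A bar) (x y : A) : bar (x * y) = bar y * bar x :=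
  hA.2.2.1 x y

theorem bar_bar (hA : IsStructurable k A bar) (x : A) : bar (bar x) = x :=
  hA.2.2.2.1 x

theorem bar_neg (hA : IsStructurable k A bar) (x : A) : bar (-x) = -bar x := by
  simpa using hA.bar_smul (-1) x

theorem bar_sub (hA : IsStructurable k A bar) (x y : A) : bar (x - y) = bar x - bar y := by
  rw [sub_eq_add_neg, hA.bar_add, hA.bar_neg, sub_eq_add_neg]

theorem bar_one (hA : IsStructurable k A bar) : bar 1 = 1 := by
  simpa [hA.bar_bar] using (hA.bar_mul (bar 1) 1).symm

theorem bar_add_bar (hA : IsStructurable k A bar) (x : A) : bar (x + bar x) = x + bar x := by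
  rw [hA.bar_add, hA.bar_bar, add_comm]

theorem bar_sub_bar (hA : IsStructurable k A bar) (x : A) : bar (x - bar x) = -(x - bar x) := by
  rw [hA.bar_sub, hA.bar_bar, neg_sub]

theorem bar_strPsi (hA : IsStructurable k A bar) (a b : A) :
    bar (strPsi bar a b) = -strPsi bar a b := by
  simp only [strPsi, hA.bar_sub, hA.bar_mul, hA.bar_bar, neg_sub]

theorem bar_strQ (hA : IsStructurable k A bar) (x s : A) :
    bar (strQ k bar x s) = -strQ k bar x s := by
  rw [strQ, hA.bar_smul, hA.bar_strPsi, smul_neg]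

theorem bar_associator (hA : IsStructurable k A bar) (x y z : A) :
    bar (associator x y z) = -associator (bar z) (bar y) (bar x) := by
  simp only [associator_apply, hA.bar_sub, hA.bar_mul, neg_sub]

theorem strTrip_strTrip (hA : IsStructurable k A bar) (x y z w a : A) :
    strTrip bar x y (strTrip bar z w a) =
      strTrip bar (strTrip bar x y z) w a - strTrip bar z (strTrip bar y x w) a
        + strTrip bar z w (strTrip bar x y a) :=
  sub_eq_iff_eq_add.mp (hA.2.2.2.2 x y z w a)

theorem strTrip_sub_middle (hA : IsStructurable k A bar) (x y y' z : A) :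
    strTrip bar x (y - y') z = strTrip bar x y z - strTrip bar x y' z := by
  simp only [strTrip, hA.bar_sub, mul_sub, sub_mul]
  abel

theorem eq_zero_of_strTrip_one (hA : IsStructurable k A bar) (h3 : (3 : k) ≠ 0) {a : A}
    (ha : strTrip bar 1 a 1 = 0) : a = 0 := by
  have two_bar : bar a + bar a = a := by
    simpa only [strTrip, hA.bar_one, one_mul, mul_one, sub_eq_zero] using ha
  have two_self : a + a = bar a := by
    simpa only [hA.bar_add, hA.bar_bar] using congrArg bar two_bar
  refine (smul_eq_zero.mp ?_).resolve_left h3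
  linear_combination (norm := module) (2 : k) • two_self + two_bar

theorem strTrip_strPsi_mul (hA : IsStructurable k A bar) (x y a b z : A) :
    strTrip bar x y (strPsi bar a b * z) + strPsi bar a b * strTrip bar y x z =
      (strPsi bar (strTrip bar x y a) b + strPsi bar a (strTrip bar x y b)) * z := by
  rw [add_mul, strPsi_mul, strPsi_mul, strPsi_mul, strPsi_mul, strTrip_sub_right,
    hA.strTrip_strTrip x y a z b, hA.strTrip_strTrip x y b z a]
  abel

theorem strTrip_skew_mul (hA : IsStructurable k A bar) (h2 : (2 : k) ≠ 0) {s : A}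
    (hs : bar s = -s) (x y z : A) :
    strTrip bar x y (s * z) + s * strTrip bar y x z =
      (strTrip bar x y s + s * strTrip bar y x 1) * z := by
  have strPsi_one : strPsi bar s 1 = s + s := by
    simp only [strPsi, hA.bar_one, hs, mul_one, one_mul, sub_neg_eq_add]
  have two_smul_eq (w : A) :
      (2 : k) • (strTrip bar x y (s * w) + s * strTrip bar y x w) =
        (strPsi bar (strTrip bar x y s) 1 + strPsi bar s (strTrip bar x y 1)) * w := by
    rw [← hA.strTrip_strPsi_mul, strPsi_one]
    simp only [strTrip, mul_add, add_mul]
    module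
  have at_one := two_smul_eq 1
  simp only [mul_one] at at_one
  refine smul_right_injective A h2 ?_
  dsimp only
  rw [two_smul_eq, ← at_one, two_smul, two_smul, add_mul]

theorem associator_add_associator_bar (hA : IsStructurable k A bar) (h2 : (2 : k) ≠ 0) {s : A}
    (hs : bar s = -s) (x y : A) :
    associator x s y + associator s (bar x) y = associator s y (x - bar x) := by
  have h := hA.strTrip_skew_mul h2 hs x 1 y
  simp only [strTrip, hA.bar_one, mul_one, one_mul, mul_add, add_mul, mul_sub, sub_mul] at h
  simp only [associator_apply, mul_sub]
  linear_combination (norm := abel) -h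

theorem associator_hermitian_skew (hA : IsStructurable k A bar) (h2 : (2 : k) ≠ 0) {a s : A}
    (ha : bar a = a) (hs : bar s = -s) (y : A) :
    associator a s y = -associator s a y := by
  have h := hA.associator_add_associator_bar h2 hs a y
  rw [ha, sub_self] at h
  rw [eq_neg_iff_add_eq_zero, h]
  simp only [associator_apply, mul_zero, sub_self]

theorem associator_skew_hermitian_right (hA : IsStructurable k A bar) (h2 : (2 : k) ≠ 0)
    {a s t : A} (ha : bar a = a) (hs : bar s = -s) (ht : bar t = -t) :
    associator s t a = -associator s a t := by
  have h := congrArg bar (hA.associator_hermitian_skew h2 ha ht s)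
  simp only [hA.bar_neg, hA.bar_associator, ha, hs, ht] at h
  simp only [associator_apply, neg_mul, mul_neg, neg_neg] at h ⊢
  linear_combination (norm := abel) -h

theorem associator_sub_associator_skew (hA : IsStructurable k A bar) (h2 : (2 : k) ≠ 0) {s t : A}
    (hs : bar s = -s) (ht : bar t = -t) (y : A) :
    associator t s y - associator s t y = (2 : k) • associator s y t := by
  have h := hA.associator_add_associator_bar h2 hs t y
  rw [ht] at h
  simp only [associator_apply, neg_mul, mul_neg, mul_sub] at h ⊢
  linear_combination (norm := module) h

theorem associator_skew_swap_outer (hA : IsStructurable k A bar) (h2 : (2 : k) ≠ 0)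
    {s t : A} (hs : bar s = -s) (ht : bar t = -t) (y : A) :
    associator t y s = -associator s y t := by
  refine smul_right_injective A h2 ?_
  linear_combination (norm := module)
    -hA.associator_sub_associator_skew h2 hs ht y - hA.associator_sub_associator_skew h2 ht hs y

theorem associator_skew_skew_skew (hA : IsStructurable k A bar) (h2 : (2 : k) ≠ 0)
    (h3 : (3 : k) ≠ 0) {s t r : A} (hs : bar s = -s) (ht : bar t = -t) (hr : bar r = -r) :
    associator s t r = -associator s r t := by
  refine smul_right_injective A h3 ?_
  linear_combination (norm := module)
    -hA.associator_sub_associator_skew h2 hs ht r - hA.associator_sub_associator_skew h2 hs hr t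
      + hA.associator_skew_swap_outer h2 hr ht s

theorem associator_skew_swap_right (hA : IsStructurable k A bar) (h2 : (2 : k) ≠ 0)
    (h3 : (3 : k) ≠ 0) {s t : A} (hs : bar s = -s) (ht : bar t = -t) (y : A) :
    associator s t y = -associator s y t := by
  have hermitian := hA.associator_skew_hermitian_right h2 (hA.bar_add_bar y) hs ht
  have skew := hA.associator_skew_skew_skew h2 h3 hs ht (hA.bar_sub_bar y)
  refine smul_right_injective A h2 ?_
  simp only [associator_apply, mul_add, mul_sub, add_mul, sub_mul] at hermitian skew ⊢
  linear_combination (norm := module) hermitian + skew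

theorem associator_skew_middle (hA : IsStructurable k A bar) (h2 : (2 : k) ≠ 0)
    (h3 : (3 : k) ≠ 0) {s : A} (hs : bar s = -s) (x y : A) :
    associator x s y = -associator s x y := by
  have h := hA.associator_add_associator_bar h2 hs x y
  have h' := hA.associator_skew_swap_right h2 h3 hs (hA.bar_sub_bar x) y
  simp only [associator_apply, mul_sub, sub_mul] at h h' ⊢
  linear_combination (norm := abel) h + h'

theorem associator_skew_right (hA : IsStructurable k A bar) (h2 : (2 : k) ≠ 0)
    (h3 : (3 : k) ≠ 0) {s : A} (hs : bar s = -s) (x y : A) :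
    associator x y s = associator s x y := by
  have h := congrArg bar (hA.associator_skew_middle h2 h3 hs (bar y) (bar x))
  simp only [hA.bar_neg, hA.bar_associator, hA.bar_bar, hs] at h
  have h' := hA.associator_skew_middle h2 h3 hs x y
  simp only [associator_apply, neg_mul, mul_neg] at h h' ⊢
  linear_combination (norm := abel) h - h'

theorem strTrip_skew_add_mul_strTrip_one (hA : IsStructurable k A bar) (h2 : (2 : k) ≠ 0)
    (h3 : (3 : k) ≠ 0) {s : A} (hs : bar s = -s) (x y : A) :
    strTrip bar x y s + s * strTrip bar y x 1 = strPsi bar (s * y) x := by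
  -- Expanded, the claim reads `[x,ȳ,s] + [s,ȳ,x] = [s,y,x̄] + [s,x̄,y]`.
  have move_right := hA.associator_skew_right h2 h3 hs x (bar y)
  have swap_x := hA.associator_skew_swap_right h2 h3 hs (hA.bar_sub_bar x) (bar y)
  have swap_y := hA.associator_skew_swap_right h2 h3 hs (hA.bar_sub_bar y) (bar x)
  simp only [strTrip, strPsi, associator_apply, hA.bar_mul, hs, one_mul, mul_one, mul_add,
    mul_sub, sub_mul, mul_neg] at move_right swap_x swap_y ⊢
  linear_combination (norm := abel) move_right + swap_x - swap_y

variable [SMulCommClass k A A] [IsScalarTower k A A]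

theorem strTrip_smul_left (hA : IsStructurable k A bar) (c : k) (x y z : A) :
    strTrip bar (c • x) y z = c • strTrip bar x y z := by
  simp only [strTrip, hA.bar_smul, mul_smul_comm, smul_mul_assoc, smul_sub, smul_add]

theorem strTrip_smul_middle (hA : IsStructurable k A bar) (c : k) (x y z : A) :
    strTrip bar x (c • y) z = c • strTrip bar x y z := by
  simp only [strTrip, hA.bar_smul, mul_smul_comm, smul_mul_assoc, smul_sub, smul_add]

theorem strU_smul (hA : IsStructurable k A bar) (c : k) (x y : A) :
    strU bar x (c • y) = c • strU bar x y :=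
  hA.strTrip_smul_middle c x y x

theorem strPsi_smul_right (hA : IsStructurable k A bar) (c : k) (x y : A) :
    strPsi bar x (c • y) = c • strPsi bar x y := by
  simp only [strPsi, hA.bar_smul, mul_smul_comm, smul_mul_assoc, smul_sub]

end IsStructurable

namespace IsConjInverse

variable {k : Type*} [Field k] {A : Type*} [NonAssocRing A] [Module k A] {bar : A → A} {x y : A}

theorem symm (h : IsConjInverse bar x y) (hA : IsStructurable k A bar) (h3 : (3 : k) ≠ 0) :
    IsConjInverse bar y x := by
  intro z
  have triple_one : strTrip bar 1 (z - strTrip bar y x z) 1 = 0 := by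
    have commutator := hA.strTrip_strTrip x y 1 z 1
    rw [h, h] at commutator
    rw [hA.strTrip_sub_middle]
    linear_combination (norm := abel) -commutator
  exact (sub_eq_zero.mp (hA.eq_zero_of_strTrip_one h3 triple_one)).symm

theorem strPsi_skew_mul (h : IsConjInverse bar x y) (hA : IsStructurable k A bar)
    (h2 : (2 : k) ≠ 0) (h3 : (3 : k) ≠ 0) {s : A} (hs : bar s = -s) :
    strPsi bar (s * x) y = (2 : k) • s := by
  rw [← hA.strTrip_skew_add_mul_strTrip_one h2 h3 hs, h.symm hA h3, h, mul_one, two_smul]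

variable [IsScalarTower k A A]

theorem strTrip_skew_mul (h : IsConjInverse bar x y) (hA : IsStructurable k A bar)
    (h2 : (2 : k) ≠ 0) (h3 : (3 : k) ≠ 0) {s : A} (hs : bar s = -s) :
    strTrip bar (s * x) x y = (3 : k) • (s * x) := by
  have psi_mul := strPsi_mul bar (s * x) y x
  rw [h.strPsi_skew_mul hA h2 h3 hs, h.symm hA h3, smul_mul_assoc] at psi_mul
  linear_combination (norm := module) -psi_mul

variable [SMulCommClass k A A]

theorem strTrip_strU_skew_mul (h : IsConjInverse bar x y) (hA : IsStructurable k A bar)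
    (h2 : (2 : k) ≠ 0) (h3 : (3 : k) ≠ 0) {s : A} (hs : bar s = -s) (z : A) :
    strTrip bar (strU bar x (s * x)) y z = (3 : k) • strTrip bar x (s * x) z := by
  have commutator := hA.strTrip_strTrip x (s * x) x y z
  rw [h, h, h.strTrip_skew_mul hA h2 h3 hs, hA.strTrip_smul_middle] at commutator
  rw [strU]
  linear_combination (norm := module) -commutator

theorem strU_strU_skew_mul (h : IsConjInverse bar x y) (hA : IsStructurable k A bar)
    (h2 : (2 : k) ≠ 0) (h3 : (3 : k) ≠ 0) {s : A} (hs : bar s = -s) :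
    strU bar y (strU bar x (s * x)) = (9 : k) • (s * x) := by
  have commutator := hA.strTrip_strTrip (s * x) x y x y
  rw [h.symm hA h3, h.symm hA h3, h.strTrip_skew_mul hA h2 h3 hs, hA.strTrip_smul_left,
    h.strTrip_skew_mul hA h2 h3 hs] at commutator
  rw [strU, strU]
  linear_combination (norm := module) commutator

theorem strQ_mul (h : IsConjInverse bar x y) (hA : IsStructurable k A bar)
    (h2 : (2 : k) ≠ 0) (h3 : (3 : k) ≠ 0) {s : A} (hs : bar s = -s) :
    strQ k bar x s * y = -(3 : k)⁻¹ • strU bar x (s * x) := by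
  have strPsi_mul_eq : strPsi bar x (strU bar x (s * x)) * y =
      -(2 : k) • strU bar x (s * x) := by
    rw [strPsi_mul, h, h.strTrip_strU_skew_mul hA h2 h3 hs, strU]
    module
  have scalar : (6 : k)⁻¹ * -2 = -3⁻¹ := by
    rw [show (6 : k) = 2 * 3 by norm_num]
    field_simp
  rw [strQ_eq, smul_mul_assoc, strPsi_mul_eq, smul_smul, scalar]

theorem strQ_strQ (h : IsConjInverse bar x y) (hA : IsStructurable k A bar)
    (h2 : (2 : k) ≠ 0) (h3 : (3 : k) ≠ 0) {s : A} (hs : bar s = -s) :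
    strQ k bar y (strQ k bar x s) = s := by
  have scalar : (6 : k)⁻¹ * -3⁻¹ * 9 * -2 = 1 := by
    rw [show (6 : k) = 2 * 3 by norm_num]
    field_simp
    norm_num
  rw [strQ_eq, h.strQ_mul hA h2 h3 hs, hA.strU_smul, h.strU_strU_skew_mul hA h2 h3 hs,
    hA.strPsi_smul_right, hA.strPsi_smul_right, ← neg_strPsi,
    h.strPsi_skew_mul hA h2 h3 hs, ← neg_smul, smul_smul, smul_smul, smul_smul, scalar, one_smul]

end IsConjInverse

theorem stmt11_general {k : Type*} [Field k] {A : Type*} [NonAssocRing A] [Module k A]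
    [SMulCommClass k A A] [IsScalarTower k A A]
    (h2 : (2 : k) ≠ 0) (h3 : (3 : k) ≠ 0)
    (bar : A → A) (hstr : IsStructurable k A bar)
    (x xhat : A) (hxhat : IsConjInverse bar x xhat) :
    (∀ s : A, bar s = -s →
      strQ k bar xhat (strQ k bar x s) = s ∧ strQ k bar x (strQ k bar xhat s) = s) ∧
    Set.BijOn (strQ k bar x) {s : A | bar s = -s} {s : A | bar s = -s} := by
  have inverse {s : A} (hs : bar s = -s) :
      strQ k bar xhat (strQ k bar x s) = s ∧ strQ k bar x (strQ k bar xhat s) = s :=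
    ⟨hxhat.strQ_strQ hstr h2 h3 hs, (hxhat.symm hstr h3).strQ_strQ hstr h2 h3 hs⟩
  have invOn : Set.InvOn (strQ k bar xhat) (strQ k bar x) {s | bar s = -s} {s | bar s = -s} :=
    ⟨fun _ hs => (inverse hs).1, fun _ hs => (inverse hs).2⟩
  exact ⟨fun _ => inverse,
    invOn.bijOn (fun s _ => hstr.bar_strQ x s) (fun s _ => hstr.bar_strQ xhat s)⟩

/-- Let `A` be a structurable division algebra over a field `k` with
`char k ≠ 2, 3`, and let `0 ≠ x ∈ A` with conjugate inverse `x̂`.  Then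
`q_{x̂}(q_x(s)) = s` and `q_x(q_{x̂}(s)) = s` for all `s ∈ S`; in particular
`q_x : S → S` is a bijection (with inverse `q_{x̂}`). -/
theorem stmt11 {k : Type*} [Field k] {A : Type*} [NonAssocRing A] [Module k A]
    [SMulCommClass k A A] [IsScalarTower k A A] [FiniteDimensional k A] [Nontrivial A]
    (h2 : (2 : k) ≠ 0) (h3 : (3 : k) ≠ 0)
    (bar : A → A) (hstr : IsStructurable k A bar) (hdiv : IsConjDivision bar)
    (x : A) (hx0 : x ≠ 0) (xhat : A) (hxhat : ∀ z : A, strTrip bar x xhat z = z) :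
    (∀ s : A, bar s = -s →
      strQ k bar xhat (strQ k bar x s) = s ∧ strQ k bar x (strQ k bar xhat s) = s) ∧
    Set.BijOn (strQ k bar x) {s : A | bar s = -s} {s : A | bar s = -s} :=
  stmt11_general h2 h3 bar hstr x xhat hxhat
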